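/- arXiv:math/0212065 — 2 statements merged into one kernel-verified Lean document; each statement's English description precedes it below -/
import Mathlib

section
/- Let (C, G, ∂) be a crossed module of groups, and form the semidirect product A = C ⋊ G with the homomorphisms s(c,g) = g and t(c,g) = ∂(c) * g. Then the set H = { (p, q) ∈ A × A : t(p) = s(q) } of composable pairs is a subgroup of the direct product A × A, and the composition map H → A sending the pair ((c,g), (c', ∂(c)*g)) to (c' * c, g) is a group homomorphism. (Equivalently, the composition of the internal category constructed from a crossed module satisfies the interchange law: ((c', ∂(c)g)·(d', ∂(d)h)) ∘ ((c,g)·(d,h)) = ((c', ∂(c)g) ∘ (c,g)) · ((d', ∂(d)h) ∘ (d,h)).) -/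
/-!
Composition in a groupoid internal to groups is forced to be `q ∘ p = q * e⁻¹ * p`, where `e` is
the identity at the middle object. Comparing `(q * q') ∘ (p * p')` with `(q ∘ p) * (q' ∘ p')` leaves
only the commutation of `q' * e'⁻¹ ∈ ker s` with `e⁻¹ * p ∈ ker t`. In `C ⋊ G` the elements of
`ker s` are the pairs `(c, 1)` and those of `ker t` the pairs `(c, (∂ c)⁻¹)`, so that these two
kernels commute is exactly the Peiffer identity.
-/

/-- A cat¹-group in the sense of Loday: a group `A` of arrows over a group `G` of objects whose
source and target maps are split by a common `unit` and have commuting kernels. It encodes a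
category internal to groups, the composition being determined by the remaining data. -/
structure CatOneGroup (A G : Type*) [Group A] [Group G] where
  source : A →* G
  target : A →* G
  unit : G →* A
  source_unit (x : G) : source (unit x) = x
  target_unit (x : G) : target (unit x) = x
  commute_of_mem_ker {a b : A} : a ∈ source.ker → b ∈ target.ker → Commute a b

namespace CatOneGroup

section Composition

variable {A G : Type*} [Group A] [Group G] (X : CatOneGroup A G)

/-- The domain of the composition. A pair `(p, q)` lists the arrow `p` applied first, so it is
composable when the target of `p` is the source of `q`. -/
def composablePairs : Subgroup (A × A) :=
  (X.target.comp (MonoidHom.fst A A)).eqLocus (X.source.comp (MonoidHom.snd A A))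

/-- The composite `q ∘ p`, given by a formula which makes sense for all `p` and `q` but is
meaningful only for composable pairs. -/
def compose (q p : A) : A :=
  q * (X.unit (X.target p))⁻¹ * p

theorem mul_inv_unit_mem_ker_source {p q : A} (h : X.target p = X.source q) :
    q * (X.unit (X.target p))⁻¹ ∈ X.source.ker := by
  rw [MonoidHom.mem_ker, map_mul, map_inv, source_unit, h, mul_inv_cancel]

theorem inv_unit_mul_mem_ker_target (p : A) :
    (X.unit (X.target p))⁻¹ * p ∈ X.target.ker := by
  rw [MonoidHom.mem_ker, map_mul, map_inv, target_unit, inv_mul_cancel]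

theorem compose_mul_mul {p' q' : A} (h : X.target p' = X.source q') (p q : A) :
    X.compose (q * q') (p * p') = X.compose q p * X.compose q' p' := by
  set e := X.unit (X.target p)
  set e' := X.unit (X.target p')
  have hcomm : Commute (q' * e'⁻¹) (e⁻¹ * p) :=
    X.commute_of_mem_ker (X.mul_inv_unit_mem_ker_source h) (X.inv_unit_mul_mem_ker_target p)
  calc
    X.compose (q * q') (p * p') = q * q' * (e * e')⁻¹ * (p * p') := by
      simp only [compose, map_mul, e, e']
    _ = q * ((q' * e'⁻¹) * (e⁻¹ * p)) * p' := by group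
    _ = q * ((e⁻¹ * p) * (q' * e'⁻¹)) * p' := by rw [hcomm.eq]
    _ = (q * e⁻¹ * p) * (q' * e'⁻¹ * p') := by group

/-- The composition of the internal category, as a homomorphism from the group of composable
pairs; the first component of a pair is the arrow applied first. -/
def composition : X.composablePairs →* A :=
  MonoidHom.mk' (fun pq => X.compose pq.1.2 pq.1.1)
    fun pq pq' => X.compose_mul_mul pq'.2 pq.1.1 pq.1.2

end Composition

section OfCrossedModule

variable {C G : Type*} [Group C] [Group G] (d : C →* G) (φ : G →* MulAut C)

/-- The target map `(c, g) ↦ d c * g` of the cat¹-group of a crossed module. -/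
def crossedModuleTarget (hequiv : ∀ (g : G) (c : C), d (φ g c) = g * d c * g⁻¹) :
    C ⋊[φ] G →* G :=
  SemidirectProduct.lift d (MonoidHom.id G) fun g => MonoidHom.ext (hequiv g)

theorem commute_of_right_eq_one_of_map_left_mul_right_eq_one
    (hpeiffer : ∀ c c' : C, φ (d c) c' = c * c' * c⁻¹)
    {a b : C ⋊[φ] G} (ha : a.right = 1) (hb : d b.left * b.right = 1) : Commute a b := by
  have hb' : b.right = d b.left⁻¹ := by rw [map_inv, eq_inv_of_mul_eq_one_right hb]
  ext
  · calc
      (a * b).left = a.left * b.left := by simp [ha]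
      _ = b.left * (b.left⁻¹ * a.left * b.left⁻¹⁻¹) := by group
      _ = b.left * φ (d b.left⁻¹) a.left := by rw [hpeiffer]
      _ = (b * a).left := by rw [SemidirectProduct.mul_left, hb']
  · simp [ha]

/-- The cat¹-group `C ⋊[φ] G` over `G` of a crossed module `(C, G, d)` with action `φ`: the pair
`(c, g)` is an arrow from `g` to `d c * g`. -/
def ofCrossedModule (hequiv : ∀ (g : G) (c : C), d (φ g c) = g * d c * g⁻¹)
    (hpeiffer : ∀ c c' : C, φ (d c) c' = c * c' * c⁻¹) : CatOneGroup (C ⋊[φ] G) G where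
  source := SemidirectProduct.rightHom
  target := crossedModuleTarget d φ hequiv
  unit := SemidirectProduct.inr
  source_unit := SemidirectProduct.rightHom_inr
  target_unit := SemidirectProduct.lift_inr d (MonoidHom.id G) _
  commute_of_mem_ker :=
    commute_of_right_eq_one_of_map_left_mul_right_eq_one d φ hpeiffer

theorem ofCrossedModule_compose (hequiv : ∀ (g : G) (c : C), d (φ g c) = g * d c * g⁻¹)
    (hpeiffer : ∀ c c' : C, φ (d c) c' = c * c' * c⁻¹) {p q : C ⋊[φ] G}
    (h : d p.left * p.right = q.right) :
    (ofCrossedModule d φ hequiv hpeiffer).compose q p = ⟨q.left * p.left, p.right⟩ := by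
  change q * (SemidirectProduct.inr (d p.left * p.right))⁻¹ * p = _
  ext <;> simp [h]

end OfCrossedModule

end CatOneGroup

/-- For a crossed module `(C, G, ∂)` with semidirect product `A = C ⋊[φ] G`,
`s (c,g) = g`, `t (c,g) = ∂ c * g`, the set of composable pairs
`H = {(p, q) : t p = s q}` is a subgroup of `A × A`, and the composition
`((c,g), (c', ∂ c * g)) ↦ (c' * c, g)` is a group homomorphism `H →* A`. -/
theorem crossed_module_composition_is_hom
    {C G : Type*} [Group C] [Group G] (d : C →* G) (φ : G →* MulAut C)
    (hequiv : ∀ (g : G) (c : C), d (φ g c) = g * d c * g⁻¹)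
    (hpeiffer : ∀ c c' : C, φ (d c) c' = c * c' * c⁻¹) :
    ∃ H : Subgroup ((C ⋊[φ] G) × (C ⋊[φ] G)),
      (∀ p : (C ⋊[φ] G) × (C ⋊[φ] G),
        p ∈ H ↔ d p.1.left * p.1.right = p.2.right) ∧
      ∃ m : H →* C ⋊[φ] G,
        ∀ q : H, m q = ⟨(q : (C ⋊[φ] G) × (C ⋊[φ] G)).2.left *
            (q : (C ⋊[φ] G) × (C ⋊[φ] G)).1.left,
          (q : (C ⋊[φ] G) × (C ⋊[φ] G)).1.right⟩ := by
  let X := CatOneGroup.ofCrossedModule d φ hequiv hpeiffer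
  exact ⟨X.composablePairs, fun _ => Iff.rfl, X.composition,
    fun q => CatOneGroup.ofCrossedModule_compose d φ hequiv hpeiffer q.2⟩
end

section
/- Let A and O be groups and let s, t : A → O and e : O → A be group homomorphisms with s ∘ e = id_O = t ∘ e. Let H = { (f, g) ∈ A × A : t(f) = s(g) } be the subgroup of composable pairs in the direct product A × A, and suppose m : H → A is a group homomorphism satisfying m(f, e(t(f))) = f and m(e(s(g)), g) = g for all f, g ∈ A (composition respecting identities). Then for all k, l in the kernel of s, the Peiffer identity holds: e(t(k)) * l * e(t(k))⁻¹ = k * l * k⁻¹. Consequently (Ker s, O, t|_{Ker s}), with the action x • k = e(x) * k * e(x)⁻¹, is a crossed module of groups. -/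
/-!
The Eckmann–Hilton argument: `(a, 1)` and `(1, b)` commute in `A × A`, and composition sends
them to `a` when `a ∈ Ker t` and to `b` when `b ∈ Ker s`, so `Ker t` and `Ker s` centralize each
other. Since `k⁻¹ * e (t k)` lies in `Ker t`, conjugation by `e (t k)` and conjugation by `k`
agree on `Ker s`.
-/

theorem commute_map_prod_one_map_one_prod {M N P S : Type*} [Monoid M] [Monoid N] [Monoid P]
    [SetLike S (M × N)] [SubmonoidClass S (M × N)] {H : S} (m : H →* P) {a : M} {b : N}
    (ha : (a, 1) ∈ H) (hb : (1, b) ∈ H) :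
    Commute (m ⟨(a, 1), ha⟩) (m ⟨(1, b), hb⟩) :=
  have comm : Commute (⟨(a, 1), ha⟩ : H) ⟨(1, b), hb⟩ :=
    Subtype.ext (MonoidHom.commute_inl_inr a b).eq
  comm.map m

theorem conj_eq_conj_iff_commute {G : Type*} [Group G] {g h l : G} :
    g * l * g⁻¹ = h * l * h⁻¹ ↔ Commute (h⁻¹ * g) l := by
  rw [commute_iff_eq, mul_inv_eq_iff_eq_mul, mul_assoc h⁻¹, inv_mul_eq_iff_eq_mul]
  simp only [mul_assoc]

theorem conj_eq_conj_of_map_eq {G M : Type*} [Group G] [MulOneClass M] (f : G →* M) {g h l : G}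
    (hgh : f g = f h) (hl : l ∈ Subgroup.centralizer f.ker) :
    g * l * g⁻¹ = h * l * h⁻¹ :=
  conj_eq_conj_iff_commute.mpr (Subgroup.mem_centralizer_iff.mp hl _ (f.eq_iff.mp hgh))

theorem ker_le_centralizer_ker_of_comp_id {A O : Type*} [Group A] [MulOneClass O]
    {s t : A →* O} {e : O →* A} {H : Subgroup (A × A)}
    (hH : ∀ p : A × A, t p.1 = s p.2 → p ∈ H) (m : H →* A)
    (hid_left : ∀ (f : A) (hf : (f, e (t f)) ∈ H), m ⟨(f, e (t f)), hf⟩ = f)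
    (hid_right : ∀ (g : A) (hg : (e (s g), g) ∈ H), m ⟨(e (s g), g), hg⟩ = g) :
    t.ker ≤ Subgroup.centralizer s.ker := by
  intro a ha
  rw [Subgroup.mem_centralizer_iff]
  intro b hb
  rw [MonoidHom.mem_ker] at ha
  rw [SetLike.mem_coe, MonoidHom.mem_ker] at hb
  have ha_mem : (a, 1) ∈ H := hH _ (by rw [ha, map_one])
  have hb_mem : (1, b) ∈ H := hH _ (by rw [hb, map_one])
  have map_a : m ⟨(a, 1), ha_mem⟩ = a := by
    simpa only [ha, map_one, ha_mem, forall_true_left] using hid_left a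
  have map_b : m ⟨(1, b), hb_mem⟩ = b := by
    simpa only [hb, map_one, hb_mem, forall_true_left] using hid_right b
  have comm := commute_map_prod_one_map_one_prod m ha_mem hb_mem
  rw [map_a, map_b] at comm
  exact comm.symm

theorem internal_category_gives_crossed_module_general
    {A O : Type*} [Group A] [Group O] (s t : A →* O) (e : O →* A)
    (hse : ∀ x : O, s (e x) = x) (hte : ∀ x : O, t (e x) = x)
    (H : Subgroup (A × A))
    (hH : ∀ p : A × A, p ∈ H ↔ t p.1 = s p.2)
    (m : H →* A)
    (hid_left : ∀ f : A, m ⟨(f, e (t f)), (hH _).mpr (hse (t f)).symm⟩ = f)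
    (hid_right : ∀ g : A, m ⟨(e (s g), g), (hH _).mpr (hte (s g))⟩ = g) :
    (∀ k : A, ∀ l ∈ s.ker, e (t k) * l * (e (t k))⁻¹ = k * l * k⁻¹) ∧
    (∀ (x : O) (k : A), t (e x * k * (e x)⁻¹) = x * t k * x⁻¹) := by
  have ker_le : s.ker ≤ Subgroup.centralizer t.ker :=
    Subgroup.le_centralizer_iff.mp <| ker_le_centralizer_ker_of_comp_id (fun p => (hH p).mpr) m
      (fun f _ => hid_left f) (fun g _ => hid_right g)
  exact ⟨fun k _ hl => conj_eq_conj_of_map_eq t (hte (t k)) (ker_le hl),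
    fun x k => by rw [map_mul, map_mul, map_inv, hte]⟩

/-- An internal category in the category of groups gives a crossed module:
if `s, t : A →* O`, `e : O →* A` satisfy `s ∘ e = id = t ∘ e`, `H ≤ A × A` is the
subgroup of composable pairs, and the composition `m : H →* A` is a group
homomorphism respecting identities, then the Peiffer identity holds on `Ker s`
(and, with equivariance, `(Ker s, O, t|_{Ker s})` is a crossed module for the
action `x • k = e x * k * (e x)⁻¹`). -/
theorem internal_category_gives_crossed_module
    {A O : Type*} [Group A] [Group O] (s t : A →* O) (e : O →* A)
    (hse : ∀ x : O, s (e x) = x) (hte : ∀ x : O, t (e x) = x)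
    (H : Subgroup (A × A))
    (hH : ∀ p : A × A, p ∈ H ↔ t p.1 = s p.2)
    (m : H →* A)
    (hid_left : ∀ f : A, m ⟨(f, e (t f)), (hH _).mpr (hse (t f)).symm⟩ = f)
    (hid_right : ∀ g : A, m ⟨(e (s g), g), (hH _).mpr (hte (s g))⟩ = g) :
    (∀ k ∈ s.ker, ∀ l ∈ s.ker, e (t k) * l * (e (t k))⁻¹ = k * l * k⁻¹) ∧
    (∀ x : O, ∀ k ∈ s.ker, t (e x * k * (e x)⁻¹) = x * t k * x⁻¹) := by
  obtain ⟨peiffer, equivariant⟩ :=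
    internal_category_gives_crossed_module_general s t e hse hte H hH m hid_left hid_right
  exact ⟨fun k _ => peiffer k, fun x k _ => equivariant x k⟩
end
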